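/- Let m ≥ 1 and let F = FreeGroup (Fin m) with free basis x_i = FreeGroup.of i. Every m-tuple τ ∈ F^m that generates F (i.e. Subgroup.closure (Set.range τ) = ⊤) is Nielsen-equivalent in F to the basis tuple (x_1,...,x_m). -/

import Mathlib

/-- An elementary Nielsen move on an `m`-tuple of elements of a group `G`:
replace some `gᵢ` by `gᵢ⁻¹`, or interchange `gᵢ` and `gⱼ` for some `i ≠ j`,
or replace `gᵢ` by `gᵢ * gⱼ` for some `i ≠ j`. -/
def NielsenMove {G : Type*} [Group G] {m : ℕ} (τ τ' : Fin m → G) : Prop :=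
  (∃ i, τ' = Function.update τ i (τ i)⁻¹) ∨
  (∃ i j, i ≠ j ∧ τ' = τ ∘ Equiv.swap i j) ∨
  (∃ i j, i ≠ j ∧ τ' = Function.update τ i (τ i * τ j))

/-- Two `m`-tuples are Nielsen-equivalent in `G` if one is obtained from the
other by a finite chain of elementary Nielsen moves. -/
def NielsenEquiv {G : Type*} [Group G] {m : ℕ} (τ τ' : Fin m → G) : Prop :=
  Relation.ReflTransGen NielsenMove τ τ'

/-!
Rank the words of a fixed length and weigh an element of the free group first by its norm, then by
the ranks of the initial halves of its reduced word and of that of its inverse. A tuple whose total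
weight is minimal in its Nielsen class is Nielsen-reduced: a product of two entries that is too
short, or an entry that cancels completely between two neighbours, would yield a move to a tuple of
smaller weight. In a product of two or more factors from a Nielsen-reduced set, a letter of every
factor survives, so the product has norm at least two. If the tuple generates, each basis element is
therefore, up to inversion, one of its entries, and the remaining entries are then cleared by
multiplying them by words in the basis.
-/

open FreeGroup Function

section Tuples

variable {G : Type*} [Group G] {m : ℕ} {τ τ' τ'' : Fin m → G}

@[refl]
theorem NielsenEquiv.refl (τ : Fin m → G) : NielsenEquiv τ τ :=
  Relation.ReflTransGen.refl

theorem NielsenEquiv.trans (h : NielsenEquiv τ τ') (h' : NielsenEquiv τ' τ'') :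
    NielsenEquiv τ τ'' :=
  Relation.ReflTransGen.trans h h'

instance : Trans (α := Fin m → G) NielsenEquiv NielsenEquiv NielsenEquiv :=
  ⟨NielsenEquiv.trans⟩

theorem nielsenEquiv_update_inv (τ : Fin m → G) (i : Fin m) :
    NielsenEquiv τ (update τ i (τ i)⁻¹) :=
  .single (.inl ⟨i, rfl⟩)

theorem nielsenEquiv_update_mul (τ : Fin m → G) {i j : Fin m} (hij : i ≠ j) :
    NielsenEquiv τ (update τ i (τ i * τ j)) :=
  .single (.inr (.inr ⟨i, j, hij, rfl⟩))

theorem nielsenEquiv_update_mul_inv (τ : Fin m → G) {i j : Fin m} (hij : i ≠ j) :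
    NielsenEquiv τ (update τ i (τ i * (τ j)⁻¹)) := by
  convert ((nielsenEquiv_update_inv τ j).trans (nielsenEquiv_update_mul _ hij)).trans
    (nielsenEquiv_update_inv _ j) using 1
  rw [update_comm hij]
  simp [hij, hij.symm]

theorem nielsenEquiv_update_mul_of_mem_closure (τ : Fin m → G) {i : Fin m} {g : G}
    (hg : g ∈ Subgroup.closure (τ '' {i}ᶜ)) : NielsenEquiv τ (update τ i (τ i * g)) := by
  induction hg using Subgroup.closure_induction_right with
  | one => rw [mul_one, update_eq_self]
  | mul_right x _ y hy ih =>
    obtain ⟨j, hj : j ≠ i, rfl⟩ := hy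
    simpa [hj, mul_assoc] using ih.trans (nielsenEquiv_update_mul _ hj.symm)
  | mul_inv_cancel x _ y hy ih =>
    obtain ⟨j, hj : j ≠ i, rfl⟩ := hy
    simpa [hj, mul_assoc] using ih.trans (nielsenEquiv_update_mul_inv _ hj.symm)

theorem nielsenEquiv_comp_perm (π : Equiv.Perm (Fin m)) :
    ∀ τ : Fin m → G, NielsenEquiv τ (τ ∘ π) := by
  induction π using Equiv.Perm.swap_induction_on with
  | one => exact NielsenEquiv.refl
  | swap_mul π i j hij ih =>
    exact fun τ => NielsenEquiv.trans (.single (.inr (.inl ⟨i, j, hij, rfl⟩))) (ih _)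

theorem nielsenEquiv_of_forall_update
    (h : ∀ (s : Finset (Fin m)) (i : Fin m), i ∉ s →
      NielsenEquiv (s.piecewise τ' τ) (update (s.piecewise τ' τ) i (τ' i))) :
    NielsenEquiv τ τ' := by
  suffices hs : ∀ s : Finset (Fin m), NielsenEquiv τ (s.piecewise τ' τ) by
    simpa only [Finset.piecewise_univ] using hs Finset.univ
  intro s
  induction s using Finset.induction_on with
  | empty => rw [Finset.piecewise_empty]
  | insert i s hi ih => simpa only [Finset.piecewise_insert] using ih.trans (h s i hi)

theorem nielsenEquiv_of_eq_or_eq_inv (h : ∀ i, τ' i = τ i ∨ τ' i = (τ i)⁻¹) :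
    NielsenEquiv τ τ' := by
  refine nielsenEquiv_of_forall_update fun s i hi => ?_
  have hτi : s.piecewise τ' τ i = τ i := s.piecewise_eq_of_notMem _ _ hi
  rcases h i with h | h <;> rw [h, ← hτi]
  · rw [update_eq_self]
  · exact nielsenEquiv_update_inv _ i

theorem nielsenEquiv_extend_one {ι : Type*} {e : ι → Fin m} (he : Injective e)
    (hτ : Subgroup.closure (Set.range (τ ∘ e)) = ⊤) :
    NielsenEquiv τ (extend e (τ ∘ e) 1) := by
  refine nielsenEquiv_of_forall_update fun s i _ => ?_
  set ρ := s.piecewise (extend e (τ ∘ e) 1) τ with hρ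
  have hρe (k : ι) : ρ (e k) = τ (e k) := by
    by_cases hk : e k ∈ s <;> simp [hρ, hk, he.extend_apply]
  by_cases hi : ∃ k, e k = i
  · obtain ⟨k, rfl⟩ := hi
    rw [he.extend_apply, comp_apply, ← hρe k, update_eq_self]
  · have htop : Subgroup.closure (ρ '' {i}ᶜ) = ⊤ := by
      refine top_unique (hτ ▸ Subgroup.closure_mono ?_)
      rintro _ ⟨k, rfl⟩
      exact ⟨e k, fun hk => hi ⟨k, hk⟩, hρe k⟩
    have hinv : (ρ i)⁻¹ ∈ Subgroup.closure (ρ '' {i}ᶜ) := htop ▸ Subgroup.mem_top _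
    simpa [extend_apply' _ _ _ hi] using nielsenEquiv_update_mul_of_mem_closure ρ hinv

theorem NielsenMove.closure_range_le (h : NielsenMove τ τ') :
    Subgroup.closure (Set.range τ) ≤ Subgroup.closure (Set.range τ') := by
  have mem (k : Fin m) : τ' k ∈ Subgroup.closure (Set.range τ') :=
    Subgroup.subset_closure ⟨k, rfl⟩
  rw [Subgroup.closure_le]
  rintro _ ⟨k, rfl⟩
  rcases h with ⟨i, rfl⟩ | ⟨i, j, -, rfl⟩ | ⟨i, j, hij, rfl⟩
  · obtain rfl | hk := eq_or_ne k i
    · simpa using mem k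
    · simpa [hk] using mem k
  · simpa using mem (Equiv.swap i j k)
  · obtain rfl | hk := eq_or_ne k i
    · have hj := mem j
      rw [update_of_ne hij.symm] at hj
      exact (Subgroup.mul_mem_cancel_right _ hj).1 (by simpa using mem k)
    · simpa [hk] using mem k

theorem NielsenEquiv.closure_range_le (h : NielsenEquiv τ τ') :
    Subgroup.closure (Set.range τ) ≤ Subgroup.closure (Set.range τ') := by
  induction h with
  | refl => exact le_rfl
  | tail _ hmove ih => exact ih.trans hmove.closure_range_le

/-- The nontrivial entries of a tuple, together with their inverses: the set to which the notion of
a Nielsen-reduced tuple refers. -/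
def symmetrizedEntries (τ : Fin m → G) : Set G :=
  {g | g ≠ 1 ∧ ∃ i, g = τ i ∨ g = (τ i)⁻¹}

theorem inv_mem_symmetrizedEntries {u : G} (hu : u ∈ symmetrizedEntries τ) :
    u⁻¹ ∈ symmetrizedEntries τ := by
  obtain ⟨hu, i, rfl | rfl⟩ := hu
  · exact ⟨inv_ne_one.2 hu, i, .inr rfl⟩
  · exact ⟨inv_ne_one.2 hu, i, .inl (inv_inv _)⟩

theorem closure_range_le_closure_symmetrizedEntries (τ : Fin m → G) :
    Subgroup.closure (Set.range τ) ≤ Subgroup.closure (symmetrizedEntries τ) := by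
  rw [Subgroup.closure_le]
  rintro _ ⟨i, rfl⟩
  by_cases h : τ i = 1
  · exact h ▸ one_mem _
  · exact Subgroup.subset_closure ⟨h, i, .inl rfl⟩

end Tuples

section Cancellation

variable {α : Type*}

theorem exists_isReduced_append {x y : List (α × Bool)} (hx : IsReduced x) (hy : IsReduced y) :
    ∃ a t s, x = a ++ invRev t ∧ y = t ++ s ∧ IsReduced (a ++ s) := by
  induction y generalizing x with
  | nil => exact ⟨x, [], [], by simp, by simp, by simpa using hx⟩
  | cons l y ih =>
    induction x using List.reverseRecOn with
    | nil => exact ⟨[], [], l :: y, by simp, by simp, by simpa using hy⟩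
    | append_singleton x k _ =>
      by_cases hkl : k.1 = l.1 → k.2 = l.2
      · have hred : IsReduced (k :: l :: y) := isReduced_cons_cons.2 ⟨hkl, hy⟩
        exact ⟨x ++ [k], [], l :: y, by simp, by simp, hx.append_overlap hred (by simp)⟩
      · obtain rfl : k = (l.1, !l.2) := by
          obtain ⟨h₁, h₂⟩ := Classical.not_imp.1 hkl
          exact Prod.ext h₁ (Bool.eq_not.2 h₂)
        obtain ⟨a, t, s, rfl, rfl, h⟩ := ih (hx.infix (List.prefix_append _ _).isInfix)
          (hy.infix (List.suffix_cons _ _).isInfix)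
        exact ⟨a, l :: t, s, by simp [invRev], by simp, h⟩

variable [DecidableEq α] {u v w : FreeGroup α} {a b c q s t : List (α × Bool)}

/-- The cancellation in a product of two elements of a free group: the reduced words of `u` and `v`
are `a ++ t⁻¹` and `t ++ s`, and after deleting `t⁻¹` and `t` that of `u * v` is `a ++ s`. -/
structure Cancels (u v : FreeGroup α) (a t s : List (α × Bool)) : Prop where
  toWord_left : u.toWord = a ++ invRev t
  toWord_right : v.toWord = t ++ s
  toWord_mul : (u * v).toWord = a ++ s

namespace Cancels

theorem of_isReduced (hu : u.toWord = a ++ invRev t) (hv : v.toWord = t ++ s)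
    (h : IsReduced (a ++ s)) : Cancels u v a t s := by
  refine ⟨hu, hv, ?_⟩
  have huv : u * v = FreeGroup.mk (a ++ s) := by
    rw [← mk_toWord (x := u), ← mk_toWord (x := v), hu, hv]
    simp only [← mul_mk, ← inv_mk]
    group
  rw [huv, toWord_mk, h.reduce_eq]

protected theorem inv (h : Cancels u v a t s) : Cancels v⁻¹ u⁻¹ (invRev s) t (invRev a) where
  toWord_left := by rw [toWord_inv, h.toWord_right, invRev_append]
  toWord_right := by rw [toWord_inv, h.toWord_left, invRev_append, invRev_invRev]
  toWord_mul := by rw [← mul_inv_rev, toWord_inv, h.toWord_mul, invRev_append]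

theorem norm_left (h : Cancels u v a t s) : u.norm = a.length + t.length := by
  rw [FreeGroup.norm, h.toWord_left, List.length_append, invRev_length]

theorem norm_right (h : Cancels u v a t s) : v.norm = t.length + s.length := by
  rw [FreeGroup.norm, h.toWord_right, List.length_append]

theorem norm_mul (h : Cancels u v a t s) : (u * v).norm = a.length + s.length := by
  rw [FreeGroup.norm, h.toWord_mul, List.length_append]

theorem length_le_left (h : Cancels u v a t s) (hv : v.norm ≤ (u * v).norm) :
    t.length ≤ a.length := by
  rw [h.norm_right, h.norm_mul] at hv
  lia

theorem length_le_right (h : Cancels u v a t s) (hu : u.norm ≤ (u * v).norm) :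
    t.length ≤ s.length := by
  rw [h.norm_left, h.norm_mul] at hu
  lia

theorem exists_mul_left (h : Cancels u v a t s) (h' : Cancels v w b q c)
    (hlt : t.length + q.length < v.norm) :
    ∃ d, d ≠ [] ∧ s.length = d.length + q.length ∧ Cancels (u * v) w (a ++ d) q c := by
  have hsq : q.length < s.length := by
    have := h.norm_right
    lia
  obtain ⟨d, rfl, rfl⟩ : ∃ d, b = t ++ d ∧ s = d ++ invRev q := by
    rcases List.append_eq_append_iff.1 (h.toWord_right.symm.trans h'.toWord_left) with hd | hd
    · exact hd
    · obtain ⟨d, -, hd⟩ := hd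
      have := congrArg List.length hd
      simp only [List.length_append, invRev_length] at this
      lia
  have hd : d ≠ [] := by
    rintro rfl
    simp at hsq
  have hleft : IsReduced (a ++ d) := by
    refine (isReduced_toWord (x := u * v)).infix (List.IsPrefix.isInfix ⟨invRev q, ?_⟩)
    rw [h.toWord_mul, List.append_assoc]
  have hright : IsReduced (d ++ c) := by
    refine (isReduced_toWord (x := v * w)).infix (List.IsSuffix.isInfix ⟨t, ?_⟩)
    rw [h'.toWord_mul, List.append_assoc]
  refine ⟨d, hd, by simp, .of_isReduced ?_ h'.toWord_right (hleft.append_overlap hright hd)⟩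
  rw [h.toWord_mul, List.append_assoc]

theorem norm_add_norm_lt (h : Cancels u v a t s) (h' : Cancels v w b q c)
    (hlt : t.length + q.length < v.norm) : u.norm + w.norm < (u * v * w).norm + v.norm := by
  obtain ⟨d, hd, hs, huvw⟩ := h.exists_mul_left h' hlt
  have hd_pos := List.length_pos_of_ne_nil hd
  rw [huvw.norm_mul, h.norm_left, h.norm_right, h'.norm_right, List.length_append]
  lia

end Cancels

theorem exists_cancels (u v : FreeGroup α) : ∃ a t s, Cancels u v a t s := by
  obtain ⟨a, t, s, hu, hv, h⟩ :=
    exists_isReduced_append (isReduced_toWord (x := u)) (isReduced_toWord (x := v))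
  exact ⟨a, t, s, .of_isReduced hu hv h⟩

end Cancellation

section ReducedProducts

variable {G : Type*} [Group G]

/-- `ReducedProd S P u` says that `P` is a product of one or more elements of `S`, no two
consecutive ones being mutually inverse, with last factor `u`. -/
inductive ReducedProd (S : Set G) : G → G → Prop
  | single {u} : u ∈ S → ReducedProd S u u
  | mul {P u v} : ReducedProd S P u → v ∈ S → u * v ≠ 1 → ReducedProd S (P * v) v

variable {S : Set G} {P u v : G}

theorem ReducedProd.last_mem (h : ReducedProd S P u) : u ∈ S := by
  cases h <;> assumption

theorem eq_one_or_exists_reducedProd_mul (h : P = 1 ∨ ∃ u, ReducedProd S P u) (hv : v ∈ S) :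
    P * v = 1 ∨ ∃ u, ReducedProd S (P * v) u := by
  rcases h with rfl | ⟨u, h⟩
  · exact .inr ⟨v, by simpa only [one_mul] using ReducedProd.single hv⟩
  by_cases huv : u * v = 1
  · cases h with
    | single => exact .inl huv
    | @mul Q u' _ hQ =>
      rw [mul_assoc, huv, mul_one]
      exact .inr ⟨u', hQ⟩
  · exact .inr ⟨v, h.mul hv huv⟩

theorem eq_one_or_exists_reducedProd (hS : ∀ u ∈ S, u⁻¹ ∈ S) (hP : P ∈ Subgroup.closure S) :
    P = 1 ∨ ∃ u, ReducedProd S P u := by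
  induction hP using Subgroup.closure_induction_right with
  | one => exact .inl rfl
  | mul_right x _ y hy ih => exact eq_one_or_exists_reducedProd_mul ih hy
  | mul_inv_cancel x _ y hy ih => exact eq_one_or_exists_reducedProd_mul ih (hS y hy)

end ReducedProducts

section NielsenReduced

variable {α : Type*} [DecidableEq α] {S : Set (FreeGroup α)} {P u v w : FreeGroup α}
  {a b c q s t : List (α × Bool)}

/-- Nielsen-reduced sets: Nielsen's conditions (N0), (N1), (N2) on a set containing the inverses of
its elements. The last condition, usually written `|u| - |v| + |w| < |u * v * w|`, is stated without
subtraction. -/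
structure IsNielsenReduced (S : Set (FreeGroup α)) : Prop where
  inv_mem : ∀ u ∈ S, u⁻¹ ∈ S
  one_notMem : 1 ∉ S
  norm_le_norm_mul : ∀ u ∈ S, ∀ v ∈ S, u * v ≠ 1 → u.norm ≤ (u * v).norm
  norm_add_norm_lt : ∀ u ∈ S, ∀ v ∈ S, ∀ w ∈ S, u * v ≠ 1 → v * w ≠ 1 →
    u.norm + w.norm < (u * v * w).norm + v.norm

namespace IsNielsenReduced

theorem norm_pos (hS : IsNielsenReduced S) (hu : u ∈ S) : 0 < u.norm := by
  rw [Nat.pos_iff_ne_zero, Ne, FreeGroup.norm_eq_zero]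
  exact fun h => hS.one_notMem (h ▸ hu)

theorem length_le_right (hS : IsNielsenReduced S) (hu : u ∈ S) (hv : v ∈ S) (huv : u * v ≠ 1)
    (h : Cancels u v a t s) : t.length ≤ s.length :=
  h.length_le_right (hS.norm_le_norm_mul u hu v hv huv)

theorem length_le_left (hS : IsNielsenReduced S) (hu : u ∈ S) (hv : v ∈ S) (huv : u * v ≠ 1)
    (h : Cancels u v a t s) : t.length ≤ a.length := by
  have hvu : v⁻¹ * u⁻¹ ≠ 1 := by rwa [← mul_inv_rev, inv_ne_one]
  simpa only [invRev_length] using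
    hS.length_le_right (hS.inv_mem v hv) (hS.inv_mem u hu) hvu h.inv

theorem length_add_length_lt (hS : IsNielsenReduced S) (hu : u ∈ S) (hv : v ∈ S) (hw : w ∈ S)
    (huv : u * v ≠ 1) (hvw : v * w ≠ 1) (h : Cancels u v a t s) (h' : Cancels v w b q c) :
    t.length + q.length < v.norm := by
  by_contra! hge
  have hts := hS.length_le_right hu hv huv h
  have hqb := hS.length_le_left hv hw hvw h'
  have hv_norm := h.norm_right
  have hv_norm' := h'.norm_left
  have hsq : s = invRev q :=
    (List.append_inj (h.toWord_right.symm.trans h'.toWord_left) (by lia)).2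
  have huvw : u * v * w = FreeGroup.mk (a ++ c) := by
    rw [← mk_toWord (x := u * v), h.toWord_mul, ← mk_toWord (x := w), h'.toWord_right, hsq]
    simp only [← mul_mk, ← inv_mk]
    group
  have hlt := hS.norm_add_norm_lt u hu v hv w hw huv hvw
  have hle : (u * v * w).norm ≤ a.length + c.length := by
    simpa only [huvw, List.length_append] using norm_mk_le (L₁ := a ++ c)
  rw [h.norm_left, h'.norm_right] at hlt
  lia

-- The invariant of the induction: the next factor cannot cancel what is left of the last one.
theorem exists_cancels_of_reducedProd (hS : IsNielsenReduced S) (h : ReducedProd S P u) :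
    ∃ Q a t s, P = Q * u ∧ Cancels Q u a t s ∧
      ∀ v ∈ S, u * v ≠ 1 → ∀ b q c, Cancels u v b q c → t.length + q.length < u.norm := by
  induction h with
  | @single u hu =>
    refine ⟨1, [], [], u.toWord, by simp, ⟨by simp, by simp, by simp⟩, ?_⟩
    intro v hv huv b q c h
    have hqb := hS.length_le_left hu hv huv h
    have hu_pos := hS.norm_pos hu
    rw [h.norm_left] at hu_pos ⊢
    simp only [List.length_nil]
    lia
  | @mul P u v h hv huv ih =>
    obtain ⟨Q, a, t, s, rfl, hQ, hlt⟩ := ih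
    obtain ⟨b, q, c, hc⟩ := exists_cancels u v
    obtain ⟨d, -, -, hd⟩ := hQ.exists_mul_left hc (hlt v hv huv b q c hc)
    exact ⟨Q * u, a ++ d, q, c, rfl, hd, fun w hw hvw _ _ _ hc' =>
      hS.length_add_length_lt h.last_mem hv hw huv hvw hc hc'⟩

theorem eq_last_or_one_lt_norm (hS : IsNielsenReduced S) (h : ReducedProd S P u) :
    P = u ∨ 1 < P.norm := by
  cases h with
  | single => exact .inl rfl
  | @mul P v _ h hu hvu =>
    right
    obtain ⟨Q, a, t, s, rfl, hQ, hlt⟩ := hS.exists_cancels_of_reducedProd h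
    obtain ⟨b, q, c, hc⟩ := exists_cancels v u
    obtain ⟨d, hd, -, hPu⟩ := hQ.exists_mul_left hc (hlt u hu hvu b q c hc)
    have hd_pos := List.length_pos_of_ne_nil hd
    have hqc := hS.length_le_right h.last_mem hu hvu hc
    have hu_pos := hS.norm_pos hu
    rw [hc.norm_right] at hu_pos
    rw [hPu.norm_mul, List.length_append]
    lia

theorem mem_of_norm_eq_one (hS : IsNielsenReduced S) (hu : u ∈ Subgroup.closure S)
    (hu1 : u.norm = 1) : u ∈ S := by
  rcases eq_one_or_exists_reducedProd hS.inv_mem hu with rfl | ⟨v, h⟩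
  · simp at hu1
  · rcases hS.eq_last_or_one_lt_norm h with rfl | hlt
    · exact h.last_mem
    · exact absurd hu1 hlt.ne'

end IsNielsenReduced

end NielsenReduced

section Weights

section WordRank

variable {β : Type*} [Finite β] {p q : List β}

/-- A numbering of words that is injective on words of any fixed length, used to compare them. The
base exceeds the number of letters by two so that it is at least `2`. -/
noncomputable def wordRank (L : List β) : ℕ :=
  Nat.ofDigits (Nat.card β + 2) (L.map fun x => (Finite.equivFin β x : ℕ))

theorem eq_of_wordRank_eq (hl : p.length = q.length) (h : wordRank p = wordRank q) : p = q := by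
  have digit_lt (L : List β) :
      ∀ d ∈ L.map fun x => (Finite.equivFin β x : ℕ), d < Nat.card β + 2 := by
    rintro _ hd
    obtain ⟨x, -, rfl⟩ := List.mem_map.1 hd
    exact (Finite.equivFin β x).isLt.trans_le (Nat.le_add_right _ _)
  have digits_eq := Nat.ofDigits_inj_of_len_eq (by lia) (by simpa using hl)
    (digit_lt p) (digit_lt q) h
  exact List.map_injective_iff.2 (Fin.val_injective.comp (Finite.equivFin β).injective) digits_eq

theorem wordRank_append_lt_wordRank_append (hl : p.length = q.length)
    (h : wordRank p < wordRank q) (c : List β) : wordRank (p ++ c) < wordRank (q ++ c) := by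
  unfold wordRank at *
  simpa [Nat.ofDigits_append, hl] using h

end WordRank

variable {α : Type*} [DecidableEq α]

theorem norm_lt_norm_mul_self {u : FreeGroup α} (hu : u ≠ 1) : u.norm < (u * u).norm := by
  have hsq : (u * u).toWord = reduceCyclically.conjugator u.toWord ++
      (List.replicate 2 (reduceCyclically u.toWord)).flatten ++
        invRev (reduceCyclically.conjugator u.toWord) := by
    rw [← pow_two, toWord_pow]
    exact reduceCyclically.reduce_flatten_replicate_succ isReduced_toWord 1
  have hconj := reduceCyclically.conj_conjugator_reduceCyclically u.toWord
  have hcore : reduceCyclically u.toWord ≠ [] := by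
    intro hnil
    rw [hnil, List.append_nil] at hconj
    refine hu ?_
    rw [← mk_toWord (x := u), ← hconj, ← mul_mk, ← inv_mk, mul_inv_cancel]
  have hcore_pos := List.length_pos_of_ne_nil hcore
  have hlen := congrArg List.length hconj
  rw [FreeGroup.norm, FreeGroup.norm, hsq]
  simp only [List.length_append, List.length_flatten, List.map_replicate,
    List.sum_replicate, smul_eq_mul, invRev_length] at hlen ⊢
  lia

/-- The initial half of the reduced word of `g`, including the middle letter. -/
def initialHalf (g : FreeGroup α) : List (α × Bool) :=
  g.toWord.take ((g.norm + 1) / 2)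

variable [Finite α] {u v : FreeGroup α} {a c p q s t : List (α × Bool)} {S : Set (FreeGroup α)}

/-- The inversion-invariant weight minimized in Nielsen reduction. Between elements of equal norm,
the ranks of the two initial halves decide. -/
noncomputable def nielsenWeight (g : FreeGroup α) : ℕ ×ₗ ℕ :=
  toLex (g.norm, wordRank (initialHalf g) + wordRank (initialHalf g⁻¹))

theorem nielsenWeight_inv (g : FreeGroup α) : nielsenWeight g⁻¹ = nielsenWeight g := by
  rw [nielsenWeight, nielsenWeight, norm_inv_eq, inv_inv, add_comm]

theorem norm_le_of_nielsenWeight_le (h : nielsenWeight u ≤ nielsenWeight v) :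
    u.norm ≤ v.norm := by
  rcases Prod.Lex.toLex_le_toLex.1 h with h | h
  · exact h.le
  · exact h.1.le

theorem nielsenWeight_lt_of_norm_lt (h : u.norm < v.norm) : nielsenWeight u < nielsenWeight v :=
  Prod.Lex.toLex_lt_toLex.2 (.inl h)

theorem nielsenWeight_lt_of_wordRank_lt (hpq : p.length = q.length)
    (hqc : q.length ≤ c.length) (hu : u.toWord = p ++ c) (hv : v.toWord = q ++ c)
    (hlt : wordRank p < wordRank q) : nielsenWeight u < nielsenWeight v := by
  have huv_norm : u.norm = v.norm := by simp [FreeGroup.norm, hu, hv, hpq]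
  have hv_norm : v.norm = q.length + c.length := by simp [FreeGroup.norm, hv]
  have inv_half_eq : initialHalf u⁻¹ = initialHalf v⁻¹ := by
    simp only [initialHalf, norm_inv_eq, huv_norm, toWord_inv, hu, hv, invRev_append]
    rw [List.take_append_of_le_length, List.take_append_of_le_length] <;>
      · rw [invRev_length]
        lia
  have half_rank_lt : wordRank (initialHalf u) < wordRank (initialHalf v) := by
    simp only [initialHalf, huv_norm, hu, hv, List.take_append, hpq]
    rw [List.take_of_length_le (l := p) (by lia), List.take_of_length_le (l := q) (by lia)]
    exact wordRank_append_lt_wordRank_append hpq hlt _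
  refine Prod.Lex.toLex_lt_toLex.2 (.inr ⟨huv_norm, ?_⟩)
  simpa only [inv_half_eq, add_lt_add_iff_right] using half_rank_lt

theorem Cancels.wordRank_le (h : Cancels u v a t s) (hat : a.length = t.length)
    (hts : t.length ≤ s.length) (hle : nielsenWeight v ≤ nielsenWeight (u * v)) :
    wordRank t ≤ wordRank a :=
  not_lt.1 fun hlt => hle.not_gt
    (nielsenWeight_lt_of_wordRank_lt hat hts h.toWord_mul h.toWord_right hlt)

theorem isNielsenReduced_of_nielsenWeight_le (hinv : ∀ u ∈ S, u⁻¹ ∈ S) (hone : 1 ∉ S)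
    (hle : ∀ u ∈ S, ∀ v ∈ S, u * v ≠ 1 → nielsenWeight u ≤ nielsenWeight (u * v)) :
    IsNielsenReduced S := by
  have hle' : ∀ u ∈ S, ∀ v ∈ S, u * v ≠ 1 → nielsenWeight v ≤ nielsenWeight (u * v) := by
    intro u hu v hv huv
    simpa only [← mul_inv_rev, nielsenWeight_inv] using
      hle _ (hinv v hv) _ (hinv u hu) (by rwa [← mul_inv_rev, inv_ne_one])
  have norm_le u (hu : u ∈ S) v (hv : v ∈ S) (huv : u * v ≠ 1) : u.norm ≤ (u * v).norm :=
    norm_le_of_nielsenWeight_le (hle u hu v hv huv)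
  have norm_le' u (hu : u ∈ S) v (hv : v ∈ S) (huv : u * v ≠ 1) : v.norm ≤ (u * v).norm :=
    norm_le_of_nielsenWeight_le (hle' u hu v hv huv)
  refine ⟨hinv, hone, norm_le, fun u hu v hv w hw huv hvw => ?_⟩
  obtain ⟨a, t, s, h⟩ := exists_cancels u v
  obtain ⟨b, q, c, h'⟩ := exists_cancels v w
  refine h.norm_add_norm_lt h' (lt_of_not_ge fun hge => hone ?_)
  have hta := h.length_le_left (norm_le' u hu v hv huv)
  have hts := h.length_le_right (norm_le u hu v hv huv)
  have hqb := h'.length_le_left (norm_le' v hv w hw hvw)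
  have hqc := h'.length_le_right (norm_le v hv w hw hvw)
  have hv_norm := h.norm_right
  have hv_norm' := h'.norm_left
  have htq : t.length = q.length := by lia
  obtain ⟨rfl, rfl⟩ := List.append_inj (h.toWord_right.symm.trans h'.toWord_left) (by lia)
  -- Now `v = t * q⁻¹`: passing from `w` to `v * w` replaces the prefix `q` by `t`, and passing
  -- from `u⁻¹` to `v⁻¹ * u⁻¹` replaces the prefix `t` by `q`.
  have rank_le : wordRank q ≤ wordRank t := h'.wordRank_le htq hqc (hle' v hv w hw hvw)
  have rank_ge : wordRank t ≤ wordRank q := by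
    have hle_inv : nielsenWeight u⁻¹ ≤ nielsenWeight (v⁻¹ * u⁻¹) := by
      simpa only [← mul_inv_rev, nielsenWeight_inv] using hle u hu v hv huv
    simpa only [invRev_invRev] using h.inv.wordRank_le (by simpa using htq.symm) (by simpa) hle_inv
  obtain rfl := eq_of_wordRank_eq htq (rank_ge.antisymm rank_le)
  have hv_one : v = 1 := by
    rw [← mk_toWord (x := v), h.toWord_right, ← mul_mk, ← inv_mk, mul_inv_cancel]
  exact hv_one ▸ hv

end Weights

section MinimalTuples

variable {α : Type*} [DecidableEq α] [Finite α] {m : ℕ} {τ σ : Fin m → FreeGroup α}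

theorem nielsenWeight_le_nielsenWeight_mul_of_minimalFor
    (hσ : MinimalFor (NielsenEquiv τ) (fun σ => ∑ i, nielsenWeight (σ i)) σ) {i : Fin m}
    {u v : FreeGroup α} (hu : u = σ i ∨ u = (σ i)⁻¹) (hv : v ∈ Subgroup.closure (σ '' {i}ᶜ)) :
    nielsenWeight u ≤ nielsenWeight (u * v) := by
  by_contra! hlt
  have hweight : nielsenWeight u = nielsenWeight (σ i) := by
    rcases hu with rfl | rfl
    · rfl
    · exact nielsenWeight_inv _
  have hequiv : NielsenEquiv σ (update σ i (u * v)) := by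
    rcases hu with rfl | rfl
    · exact nielsenEquiv_update_mul_of_mem_closure σ hv
    · have himage : update σ i (σ i)⁻¹ '' {i}ᶜ = σ '' {i}ᶜ :=
        Set.image_congr fun j hj => update_of_ne hj _ _
      rw [← himage] at hv
      simpa using (nielsenEquiv_update_inv σ i).trans
        (nielsenEquiv_update_mul_of_mem_closure _ hv)
  refine hσ.not_lt (hσ.prop.trans hequiv) (Finset.sum_lt_sum (fun k _ => ?_)
    ⟨i, Finset.mem_univ i, by simpa [← hweight] using hlt⟩)
  obtain rfl | hk := eq_or_ne k i
  · simpa [← hweight] using hlt.le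
  · simp [hk]

theorem exists_nielsenEquiv_isNielsenReduced (τ : Fin m → FreeGroup α) :
    ∃ σ, NielsenEquiv τ σ ∧ IsNielsenReduced (symmetrizedEntries σ) := by
  obtain ⟨σ, hσ⟩ := exists_minimalFor_of_wellFoundedLT (NielsenEquiv τ)
    (fun σ => ∑ i, nielsenWeight (σ i)) ⟨τ, .refl τ⟩
  refine ⟨σ, hσ.prop, isNielsenReduced_of_nielsenWeight_le
    (fun _ => inv_mem_symmetrizedEntries) (fun h => h.1 rfl) ?_⟩
  rintro u ⟨hu, i, hui⟩ v ⟨-, j, hvj⟩ huv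
  obtain rfl | hij := eq_or_ne i j
  · obtain rfl : u = v := by
      rcases hui with rfl | rfl <;> rcases hvj with rfl | rfl <;> simp_all
    exact (nielsenWeight_lt_of_norm_lt (norm_lt_norm_mul_self hu)).le
  · have hσj : σ j ∈ Subgroup.closure (σ '' {i}ᶜ) :=
      Subgroup.subset_closure ⟨j, hij.symm, rfl⟩
    refine nielsenWeight_le_nielsenWeight_mul_of_minimalFor hσ hui ?_
    rcases hvj with rfl | rfl
    · exact hσj
    · exact inv_mem hσj

end MinimalTuples

theorem exists_nielsenEquiv_of_eq_or_eq_inv {α : Type*} [Finite α] {m : ℕ}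
    {τ : Fin m → FreeGroup α} (hτ : Subgroup.closure (Set.range τ) = ⊤) :
    ∃ σ, NielsenEquiv τ σ ∧
      ∃ f : α → Fin m, Injective f ∧ ∀ a, of a = σ (f a) ∨ of a = (σ (f a))⁻¹ := by
  classical
  obtain ⟨σ, hτσ, hσ⟩ := exists_nielsenEquiv_isNielsenReduced τ
  have htop : Subgroup.closure (symmetrizedEntries σ) = ⊤ := top_unique <|
    hτ ▸ hτσ.closure_range_le.trans (closure_range_le_closure_symmetrizedEntries σ)
  have of_mem (a : α) : of a ∈ symmetrizedEntries σ :=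
    hσ.mem_of_norm_eq_one (htop ▸ Subgroup.mem_top _) (norm_of a)
  choose f hf using fun a => (of_mem a).2
  refine ⟨σ, hτσ, f, fun a b hab => ?_, hf⟩
  have of_eq : of a = of b ∨ of a = (of b)⁻¹ := by
    rcases hf a with ha | ha <;> rcases hf b with hb | hb <;> simp [ha, hb, hab]
  rcases of_eq with h | h
  · exact of_injective h
  · simpa [toWord_inv, invRev] using congrArg toWord h

theorem generating_tuple_nielsenEquiv_basis_general {α : Type*} {m : ℕ} (e : α ↪ Fin m)
    (τ : Fin m → FreeGroup α) (hτ : Subgroup.closure (Set.range τ) = ⊤) :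
    NielsenEquiv τ (extend e of 1) := by
  classical
  have : Finite α := .of_injective e e.injective
  obtain ⟨σ, hτσ, f, hf, hσf⟩ := exists_nielsenEquiv_of_eq_or_eq_inv hτ
  obtain ⟨π, hπ⟩ := Equiv.Perm.exists_extending_pair e f e.injective hf
  set ρ : Fin m → FreeGroup α := extend e of (σ ∘ π) with hρ
  have hρe : ρ ∘ e = of := extend_comp e.injective _ _
  have hρe_top : Subgroup.closure (Set.range (ρ ∘ e)) = ⊤ := hρe ▸ closure_range_of α
  have hσρ (i : Fin m) : ρ i = (σ ∘ π) i ∨ ρ i = ((σ ∘ π) i)⁻¹ := by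
    by_cases hi : ∃ a, e a = i
    · obtain ⟨a, rfl⟩ := hi
      simpa [hρ, e.injective.extend_apply, hπ] using hσf a
    · exact .inl (extend_apply' _ _ _ hi)
  calc
    NielsenEquiv τ σ := hτσ
    NielsenEquiv _ (σ ∘ π) := nielsenEquiv_comp_perm π σ
    NielsenEquiv _ ρ := nielsenEquiv_of_eq_or_eq_inv hσρ
    NielsenEquiv _ (extend e of 1) := by
      simpa only [hρe] using
        nielsenEquiv_extend_one e.injective hρe_top

/-- In a free group of finite rank `m`, every generating `m`-tuple is
Nielsen-equivalent to the free basis tuple. -/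
theorem generating_tuple_nielsenEquiv_basis {m : ℕ} (hm : 1 ≤ m)
    (τ : Fin m → FreeGroup (Fin m))
    (hτ : Subgroup.closure (Set.range τ) = ⊤) :
    NielsenEquiv τ (fun i => FreeGroup.of i) := by
  simpa only [Function.Embedding.coe_refl, Function.extend_id] using
    generating_tuple_nielsenEquiv_basis_general (.refl _) τ hτ
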